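/- Let S = S(t,z) be the unique formal power series in t with coefficients in ℚ[z], constant term 0, satisfying 1 − tz/(1−S) − t/S = 0, equivalently S = (1+t−tz − √(1−2t(1+z)+t²(1−z)²))/2. Then for all integers n ≥ 1 and k ∈ ℤ, the coefficient of tⁿ in Sᵏ(S−1) equals: 0 if n < k; −1 if n = k; 1−kz if n = k+1; and (1/n)·Σ_{p=1}^{n−k} zᵖ·C(n,p)·C(n−k−1,p−1)·(n−p−kp)/(n−k−1) otherwise. -/

import Mathlib

open scoped LaurentSeries

/-- Binomial coefficient with arbitrary rational upper argument. -/
noncomputable def ratChoose (x : ℚ) (b : ℕ) : ℚ :=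
  (∏ i ∈ Finset.range b, (x - i)) / (Nat.factorial b)

noncomputable section

/-- The coefficient field ℚ(z): rational functions in z. -/
abbrev K := RatFunc ℚ

/-- z, as an element of the coefficient field. -/
def z : K := RatFunc.X

/-- t, as a Laurent series. -/
def t : LaurentSeries K := HahnSeries.single 1 1

@[simp]
theorem HahnSeries.coeff_intCast_mul {F : Type*} [Field F] (m : ℤ) (f : F⸨X⸩) (n : ℤ) :
    ((m : F⸨X⸩) * f).coeff n = m * f.coeff n := by
  rw [← map_intCast HahnSeries.C, HahnSeries.C_mul_eq_smul, HahnSeries.coeff_smul, smul_eq_mul]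

open HahnSeries in
/-- The Euler operator `X d/dX` on Laurent series, as a derivation. -/
def eulerDerivation (F : Type*) [Field F] : Derivation ℤ F⸨X⸩ F⸨X⸩ where
  toFun f :=
    ⟨fun n ↦ (n : F) * f.coeff n, f.isPWO_support.mono fun n hn h ↦ hn (by simp [h])⟩
  map_add' f g := by ext n; simp [mul_add]
  map_smul' m f := by ext n; simp [Algebra.smul_def, mul_left_comm]
  map_one_eq_zero' := by ext n; by_cases hn : n = 0 <;> simp [HahnSeries.coeff_one, hn]
  leibniz' f g := by
    ext n
    simp only [LinearMap.coe_mk, AddHom.coe_mk, smul_eq_mul, coeff_add]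
    rw [coeff_mul, mul_comm g,
      coeff_mul_right' (y := ⟨_, _⟩) g.isPWO_support (fun m hm h ↦ hm (by simp [h])),
      coeff_mul_left' (x := ⟨_, _⟩) f.isPWO_support (fun m hm h ↦ hm (by simp [h])),
      ← Finset.sum_add_distrib, Finset.mul_sum]
    refine Finset.sum_congr rfl fun ij hij ↦ ?_
    rw [← (Finset.mem_antidiagonal.mp hij).2.2]
    push_cast
    ring

section EulerDerivation

variable {F : Type*} [Field F]

@[simp]
theorem coeff_eulerDerivation (f : F⸨X⸩) (n : ℤ) :
    (eulerDerivation F f).coeff n = n * f.coeff n := rfl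

theorem orderTop_le_orderTop_eulerDerivation (f : F⸨X⸩) :
    f.orderTop ≤ (eulerDerivation F f).orderTop := by
  rw [HahnSeries.le_orderTop_iff_forall]
  intro i hi
  simp [HahnSeries.coeff_eq_zero_of_lt_orderTop hi]

/-- The residue of a logarithmic derivative is the order. -/
theorem coeff_zero_inv_mul_eulerDerivation {f : F⸨X⸩} (hf : f ≠ 0) :
    (f⁻¹ * eulerDerivation F f).coeff 0 = f.order := by
  have hsplit : f⁻¹ * eulerDerivation F f =
      HahnSeries.C (f.order : F) +
        f⁻¹ * (eulerDerivation F f - f.order • f) := by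
    rw [mul_sub, mul_smul_comm, inv_mul_cancel₀ hf, zsmul_one, map_intCast, add_sub_cancel]
  have hinv : f⁻¹.orderTop + f.orderTop = 0 := by
    rw [← HahnSeries.orderTop_mul, inv_mul_cancel₀ hf, HahnSeries.orderTop_one]
  have hlt : f.orderTop <
      (eulerDerivation F f - f.order • f).orderTop := by
    rw [← HahnSeries.order_eq_orderTop_of_ne_zero hf]
    refine lt_of_lt_of_le (WithTop.coe_lt_coe.mpr (lt_add_one f.order)) ?_
    rw [HahnSeries.le_orderTop_iff_forall]
    intro i hi
    rcases (Int.lt_add_one_iff.mp (WithTop.coe_lt_coe.mp hi)).lt_or_eq with h | rfl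
    · simp [HahnSeries.coeff_eq_zero_of_lt_order h]
    · simp
  rw [hsplit, HahnSeries.coeff_add, HahnSeries.coeff_eq_zero_of_lt_orderTop (i := 0)
    (x := f⁻¹ * _), add_zero]
  · simp only [HahnSeries.C_apply, HahnSeries.coeff_single_same]
  · rw [HahnSeries.orderTop_mul, WithTop.coe_zero, ← hinv]
    exact WithTop.add_lt_add_left (by intro h; simp [h] at hinv) hlt

theorem coeff_zero_zpow_mul_eulerDerivation [CharZero F] (f : F⸨X⸩) {j : ℤ} (hj : j ≠ -1) :
    (f ^ j * eulerDerivation F f).coeff 0 = 0 := by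
  have h := congrArg (HahnSeries.coeff · 0) ((eulerDerivation F).leibniz_zpow f (j + 1))
  have hj' : ((j + 1 : ℤ) : F) ≠ 0 := Int.cast_ne_zero.mpr (by omega)
  simp only [coeff_eulerDerivation, Int.cast_zero, zero_mul, HahnSeries.coeff_intCast_mul,
    add_sub_cancel_right, smul_eq_mul, zsmul_eq_mul] at h
  exact (mul_eq_zero.mp h.symm).resolve_left hj'

theorem coeff_zero_zpow_mul_pow_mul_eulerDerivation_of_nonneg {S : F⸨X⸩}
    (hS : 0 < S.orderTop) (p : ℕ) {j : ℤ} (hj : 0 ≤ j) :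
    (S ^ j * (1 - S)⁻¹ ^ p * eulerDerivation F S).coeff 0 = 0 := by
  lift j to ℕ using hj
  have hone : (1 - S).orderTop = 0 := by
    rw [HahnSeries.orderTop_sub (by simpa using hS), HahnSeries.orderTop_one]
  have hne : 1 - S ≠ 0 := by intro h; simp [h] at hone
  have hinv : (1 - S)⁻¹.orderTop = 0 := by
    have h : (1 - S)⁻¹.orderTop + (1 - S).orderTop = 0 := by
      rw [← HahnSeries.orderTop_mul, inv_mul_cancel₀ hne, HahnSeries.orderTop_one]
    simpa [hone] using h
  have h₁ : 0 ≤ (S ^ j).orderTop :=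
    (nsmul_nonneg hS.le j).trans HahnSeries.orderTop_nsmul_le_orderTop_pow
  have h₂ : 0 ≤ ((1 - S)⁻¹ ^ p).orderTop :=
    (nsmul_nonneg hinv.ge p).trans HahnSeries.orderTop_nsmul_le_orderTop_pow
  apply HahnSeries.coeff_eq_zero_of_lt_orderTop
  rw [zpow_natCast, HahnSeries.orderTop_mul, HahnSeries.orderTop_mul, WithTop.coe_zero]
  exact (hS.trans_le (orderTop_le_orderTop_eulerDerivation S)).trans_le
    (le_add_of_nonneg_left (add_nonneg h₁ h₂))

/-- The residue of `S ^ (-1 - i) * (1 - S) ^ (-p) dS` for a Laurent series `S` of order one. -/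
theorem coeff_zero_zpow_mul_pow_mul_eulerDerivation [CharZero F] {S : F⸨X⸩}
    (hS : S.order = 1) (p i : ℕ) :
    (S ^ (-1 - i : ℤ) * (1 - S)⁻¹ ^ p * eulerDerivation F S).coeff 0 = p.multichoose i := by
  have hS0 : S ≠ 0 := by rintro rfl; simp at hS
  have hpos : 0 < S.orderTop := by
    rw [← HahnSeries.order_eq_orderTop_of_ne_zero hS0, hS]
    exact WithTop.coe_pos.mpr one_pos
  have hne : 1 - S ≠ 0 := by
    intro h
    rw [← sub_eq_zero.mp h] at hS
    simp at hS
  have hrec (p : ℕ) (j : ℤ) :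
      (S ^ j * (1 - S)⁻¹ ^ (p + 1) * eulerDerivation F S).coeff 0 =
        (S ^ j * (1 - S)⁻¹ ^ p * eulerDerivation F S).coeff 0 +
          (S ^ (j + 1) * (1 - S)⁻¹ ^ (p + 1) * eulerDerivation F S).coeff 0 := by
    rw [← HahnSeries.coeff_add]
    congr 1
    have h : (1 - S) * (1 - S)⁻¹ = 1 := mul_inv_cancel₀ hne
    rw [zpow_add_one₀ hS0]
    linear_combination (S ^ j * (1 - S)⁻¹ ^ p * eulerDerivation F S) * h
  induction p generalizing i with
  | zero =>
    cases i with
    | zero => simpa [hS] using coeff_zero_inv_mul_eulerDerivation hS0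
    | succ i =>
      rw [pow_zero, mul_one, coeff_zero_zpow_mul_eulerDerivation S (by push_cast; omega)]
      simp
  | succ p ihp =>
    induction i with
    | zero =>
      rw [hrec, ihp, coeff_zero_zpow_mul_pow_mul_eulerDerivation_of_nonneg hpos _ (by simp)]
      simp
    | succ i ihi =>
      rw [hrec, ihp, Nat.multichoose_succ_succ,
        show (-1 - ((i + 1 : ℕ) : ℤ) + 1) = -1 - (i : ℤ) by push_cast; ring, ihi, Nat.cast_add]

/-- Lagrange inversion for `Sᵏ (S - 1)`, where `X = S (1 + c S / (1 - S))⁻¹`. -/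
theorem natCast_mul_coeff_zpow_mul_sub_one {S : F⸨X⸩} (hS0 : S ≠ 0) (c : F)
    (hS : HahnSeries.single 1 1 * (S⁻¹ * (HahnSeries.C c * S * (1 - S)⁻¹ + 1)) = 1)
    (n : ℕ) (k : ℤ) :
    (n : F) * (S ^ k * (S - 1)).coeff n =
      ∑ p ∈ Finset.range (n + 1), c ^ p * n.choose p *
        ((k + 1) * (S ^ (k - n + p) * (1 - S)⁻¹ ^ p * eulerDerivation F S).coeff 0 -
          k * (S ^ (k - n + p - 1) * (1 - S)⁻¹ ^ p * eulerDerivation F S).coeff 0) := by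
  set H := S ^ k * (S - 1) with hH
  have hE : eulerDerivation F H =
      (HahnSeries.C (k + 1 : F) * S ^ k - HahnSeries.C (k : F) * S ^ (k - 1)) *
        eulerDerivation F S := by
    rw [hH, mul_sub, mul_one, ← zpow_add_one₀ hS0, map_sub, Derivation.leibniz_zpow,
      Derivation.leibniz_zpow]
    simp only [zsmul_eq_mul, smul_eq_mul, add_sub_cancel_right, map_add, map_intCast, map_one]
    push_cast
    ring
  have hshift : (n : F) * H.coeff n =
      ((S⁻¹ * (HahnSeries.C c * S * (1 - S)⁻¹ + 1)) ^ n * eulerDerivation F H).coeff 0 := by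
    have h : eulerDerivation F H = HahnSeries.single (n : ℤ) (1 : F) *
        ((S⁻¹ * (HahnSeries.C c * S * (1 - S)⁻¹ + 1)) ^ n * eulerDerivation F H) := by
      rw [← mul_assoc, show HahnSeries.single (n : ℤ) (1 : F) = HahnSeries.single 1 1 ^ n by simp,
        ← mul_pow, hS, one_pow, one_mul]
    have h' := congrArg (HahnSeries.coeff · (n : ℤ)) h
    rw [HahnSeries.coeff_single_mul] at h'
    simpa using h'
  rw [hshift, mul_pow, add_pow, Finset.mul_sum, Finset.sum_mul, HahnSeries.coeff_sum]
  refine Finset.sum_congr rfl fun p _ ↦ ?_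
  have hterm : S⁻¹ ^ n * ((HahnSeries.C c * S * (1 - S)⁻¹) ^ p * 1 ^ (n - p) *
        (n.choose p : F⸨X⸩)) * eulerDerivation F H =
      HahnSeries.C (c ^ p * n.choose p) *
        (HahnSeries.C (k + 1 : F) *
            (S ^ (k - n + p) * (1 - S)⁻¹ ^ p * eulerDerivation F S) -
          HahnSeries.C (k : F) *
            (S ^ (k - n + p - 1) * (1 - S)⁻¹ ^ p * eulerDerivation F S)) := by
    rw [hE, zpow_sub_one₀ hS0, zpow_sub_one₀ hS0, zpow_add₀ hS0, zpow_sub₀ hS0, zpow_natCast,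
      zpow_natCast, map_mul, map_pow, map_natCast, one_pow, mul_one, mul_pow, mul_pow, inv_pow S]
    ring
  rw [hterm]
  simp only [HahnSeries.C_mul_eq_smul, HahnSeries.coeff_smul, HahnSeries.coeff_sub, smul_eq_mul]

end EulerDerivation

theorem ratChoose_natCast (a b : ℕ) : ratChoose a b = a.choose b := by
  rw [ratChoose, div_eq_iff (by positivity), ← descPochhammer_eval_eq_prod_range,
    descPochhammer_eval_eq_descFactorial, Nat.descFactorial_eq_factorial_mul_choose]
  push_cast
  ring

theorem cast_choose_succ_div (m q : ℕ) (hq : q ≤ m + 1) :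
    (m.choose q : ℚ) = (m + 1 - q) * (m + 1).choose q / (m + 1 : ℕ) := by
  have h := congrArg (Nat.cast : ℕ → ℚ) (Nat.choose_mul_succ_eq m q)
  push_cast [hq] at h ⊢
  field_simp
  linear_combination h

theorem order_eq_one_of_quadratic {F : Type*} [Field F] {S : F⸨X⸩} (c : F)
    (hneg : ∀ i : ℤ, i < 0 → S.coeff i = 0) (h0 : S.coeff 0 = 0)
    (heq : S ^ 2 - (1 + HahnSeries.single 1 1 - HahnSeries.single 1 1 * HahnSeries.C c) * S +
      HahnSeries.single 1 1 = 0) :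
    S.order = 1 := by
  set U : F⸨X⸩ := 1 + HahnSeries.single 1 1 - HahnSeries.single 1 1 * HahnSeries.C c - S with hU
  have hmul : S * U = HahnSeries.single 1 1 := by linear_combination -heq
  have hX : (HahnSeries.single 1 1 : F⸨X⸩) ≠ 0 := by simp
  have hS0 : S ≠ 0 := by rintro rfl; exact hX (by simpa using hmul.symm)
  have hU0 : U ≠ 0 := right_ne_zero_of_mul (hmul ▸ hX)
  have hUcoeff : U.coeff 0 = 1 := by
    simp [hU, h0, HahnSeries.coeff_single_of_ne]
  have hUorder : U.order = 0 := by
    refine le_antisymm (HahnSeries.order_le_of_coeff_ne_zero (by simp [hUcoeff])) ?_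
    rw [HahnSeries.le_order_iff_forall hU0]
    intro i hi
    simp [hU, hneg i hi, HahnSeries.coeff_one, hi.ne, HahnSeries.coeff_single_of_ne,
      show i ≠ 1 by omega]
  simpa [HahnSeries.order_mul hS0 hU0, hUorder] using congrArg HahnSeries.order hmul

/-- Let S be the formal power series in t over ℚ[z] (viewed inside the field of Laurent
series over ℚ(z)) with S(0)=0 satisfying S² − (1+t−tz)S + t = 0, i.e. 1 − tz/(1−S) − t/S = 0.
Then for n ≥ 1 and k ∈ ℤ, the coefficient of tⁿ in Sᵏ(S−1) equals: 0 if n < k; −1 if n = k;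
1−kz if n = k+1; and (1/n)·Σ_{p=1}^{n−k} zᵖ·C(n,p)·C(n−k−1,p−1)·(n−p−kp)/(n−k−1) otherwise. -/
theorem coeff_S_pow (S : LaurentSeries K)
    (hneg : ∀ i : ℤ, i < 0 → S.coeff i = 0)
    (h0 : S.coeff 0 = 0)
    (heq : S^2 - (1 + t - t * HahnSeries.C z) * S + t = 0)
    (n : ℕ) (hn : 1 ≤ n) (k : ℤ) :
    (S^k * (S - 1)).coeff (n : ℤ)
      = if (n : ℤ) < k then 0
        else if (n : ℤ) = k then -1
        else if (n : ℤ) = k + 1 then 1 - (k : K) * z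
        else algebraMap ℚ K (1/(n : ℚ)) *
          ∑ p ∈ Finset.Icc 1 ((n : ℤ) - k).toNat,
            z^p * algebraMap ℚ K
              (ratChoose (n : ℚ) p * ratChoose ((n : ℚ) - (k : ℚ) - 1) (p-1) *
                (((n : ℚ) - (p : ℚ) - (k : ℚ)*(p : ℚ)) / ((n : ℚ) - (k : ℚ) - 1))) := by
  have horder : S.order = 1 := order_eq_one_of_quadratic z hneg h0 heq
  have hS0 : S ≠ 0 := by rintro rfl; simp at horder
  have hS1 : 1 - S ≠ 0 := by
    intro h
    rw [← sub_eq_zero.mp h] at horder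
    simp at horder
  have hpos : 0 < S.orderTop := by
    rw [← HahnSeries.order_eq_orderTop_of_ne_zero hS0, horder]
    exact WithTop.coe_pos.mpr one_pos
  have hn0 : (n : K) ≠ 0 := Nat.cast_ne_zero.mpr (by omega)
  have hlagrange := natCast_mul_coeff_zpow_mul_sub_one hS0 z (by
    change t * _ = 1
    field_simp
    linear_combination heq) n k
  have hres_zero (p : ℕ) (j : ℤ) (hj : 0 ≤ j) :=
    coeff_zero_zpow_mul_pow_mul_eulerDerivation_of_nonneg hpos p hj
  have hres (p i : ℕ) (j : ℤ) (hj : j = -1 - i) :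
      (S ^ j * (1 - S)⁻¹ ^ p * eulerDerivation K S).coeff 0 = p.multichoose i :=
    hj ▸ coeff_zero_zpow_mul_pow_mul_eulerDerivation horder p i
  refine mul_left_cancel₀ hn0 (hlagrange.trans ?_)
  split_ifs with h₁ h₂ h₃
  · rw [mul_zero]
    refine Finset.sum_eq_zero fun p _ ↦ ?_
    rw [hres_zero _ _ (by omega), hres_zero _ _ (by omega)]
    simp
  · rw [Finset.sum_range_succ', Finset.sum_eq_zero fun p _ ↦ ?_]
    · rw [hres_zero _ _ (by omega), hres 0 0 _ (by omega)]
      simp [← h₂]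
    · rw [hres_zero _ _ (by omega), hres_zero _ _ (by omega)]
      simp
  · obtain ⟨n, rfl⟩ := Nat.exists_eq_add_of_le' hn
    obtain rfl : k = n := by omega
    rw [Finset.sum_range_succ', Finset.sum_range_succ', Finset.sum_eq_zero fun p _ ↦ ?_]
    · rw [hres_zero _ _ (by omega), hres 1 0 _ (by omega), hres 0 0 _ (by omega),
        hres 0 1 _ (by omega)]
      simp
      ring
    · rw [hres_zero _ _ (by omega), hres_zero _ _ (by omega)]
      simp
  · obtain ⟨m, hm⟩ : ∃ m : ℕ, (n : ℤ) - k = m + 2 := ⟨((n : ℤ) - k - 2).toNat, by omega⟩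
    obtain rfl : k = n - (m + 2) := by omega
    rw [one_div, map_inv₀, map_natCast, mul_inv_cancel_left₀ hn0, hm]
    rw [show ((m : ℤ) + 2).toNat = m + 2 by omega]
    have hupper : (n : ℚ) - ((n - (m + 2) : ℤ) : ℚ) - 1 = (m + 1 : ℕ) := by push_cast; ring
    simp only [hupper, ratChoose_natCast]
    have hle : n + 1 ≤ n + m + 3 := by omega
    rw [Finset.sum_subset (Finset.range_subset_range.mpr hle)]
    · rw [← Finset.sum_subset (s₁ := Finset.Icc 1 (m + 2))]
      · refine Finset.sum_congr rfl fun p hp ↦ ?_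
        obtain ⟨hp₁, hp₂⟩ := Finset.mem_Icc.mp hp
        obtain ⟨q, rfl⟩ := Nat.exists_eq_add_of_le' hp₁
        have hfst : (S ^ ((n - (m + 2) : ℤ) - n + (q + 1 : ℕ)) * (1 - S)⁻¹ ^ (q + 1) *
            eulerDerivation K S).coeff 0 = m.choose q := by
          rcases Nat.lt_or_ge m q with h | h
          · rw [hres_zero _ _ (by omega), Nat.choose_eq_zero_of_lt h, Nat.cast_zero]
          · rw [hres _ (m - q) _ (by omega), Nat.multichoose_eq,
              show q + 1 + (m - q) - 1 = m by omega, Nat.choose_symm h]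
        have hsnd : (S ^ ((n - (m + 2) : ℤ) - n + (q + 1 : ℕ) - 1) * (1 - S)⁻¹ ^ (q + 1) *
            eulerDerivation K S).coeff 0 = (m + 1).choose q := by
          rw [hres _ (m + 1 - q) _ (by omega), Nat.multichoose_eq,
            show q + 1 + (m + 1 - q) - 1 = m + 1 by omega, Nat.choose_symm (by omega)]
        rw [hfst, hsnd, mul_assoc]
        congr 1
        rw [← map_natCast (algebraMap ℚ K) (n.choose _), ← map_natCast (algebraMap ℚ K) (m.choose _),
          ← map_natCast (algebraMap ℚ K) ((m + 1).choose _), ← map_intCast (algebraMap ℚ K),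
          ← map_one (algebraMap ℚ K), ← map_add, ← map_mul, ← map_mul, ← map_sub, ← map_mul,
          cast_choose_succ_div m q (by omega), Nat.add_sub_cancel]
        congr 1
        push_cast
        field_simp
        ring
      · intro p hp
        simp only [Finset.mem_Icc, Finset.mem_range] at hp ⊢
        omega
      · intro p _ hp
        rw [Finset.mem_Icc, not_and_or, not_le, not_le] at hp
        rcases hp with hp | hp
        · obtain rfl : p = 0 := by omega
          rw [hres _ (m + 1) _ (by omega), hres _ (m + 2) _ (by omega)]
          simp
        · rw [hres_zero _ _ (by omega), hres_zero _ _ (by omega)]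
          simp
    · intro p _ hp
      rw [Nat.choose_eq_zero_of_lt (by simpa using hp)]
      simp

end
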